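/- Let α be a type and A, B lists over α. Let i ≥ 2 and m ≥ 1 be integers and set k = 2^i·m − 2^{i−1} + 1 (an odd integer). Then S_{A,B}(k) = S(m)^i ⊕ S(a(m)) if m ≥ 2, and S_{A,B}(k) = S(0)^i ⊕ S(1) if m = 1, where S(m)^i denotes the concatenation of i copies of S(m). -/

import Mathlib

/-- Stern's diatomic sequence. -/
def stern : ℕ → ℕ
  | 0 => 0
  | 1 => 1
  | n + 2 =>
    if (n + 2) % 2 = 0 then stern ((n + 2) / 2)
    else stern ((n + 2) / 2) + stern ((n + 2) / 2 + 1)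
decreasing_by all_goals omega

/-- OEIS A003602: a(1)=1, a(2n)=a(n), a(2n+1)=n+1. (a(0)=0 as junk value.) -/
def aseq : ℕ → ℕ
  | 0 => 0
  | 1 => 1
  | n + 2 =>
    if (n + 2) % 2 = 0 then aseq ((n + 2) / 2)
    else (n + 2) / 2 + 1
decreasing_by all_goals omega

-- the modified sequence `a*`: zero at powers of two.
open Classical in
noncomputable def aStar (j : ℕ) : ℕ :=
  if ∃ k, j = 2 ^ k then 0 else aseq j

theorem aseq_le (n : ℕ) : aseq n ≤ n := by
  induction n using Nat.strong_induction_on with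
  | _ n ih =>
    match n with
    | 0 => simp [aseq]
    | 1 => simp [aseq]
    | m + 2 =>
      rw [aseq]
      split
      · exact le_trans (ih ((m + 2) / 2) (by omega)) (by omega)
      · omega

theorem aStar_le (j : ℕ) : aStar j ≤ j := by
  unfold aStar
  split
  · omega
  · exact aseq_le j

/-- The Markov-type sequence `S_{A,B}(n)`. -/
noncomputable def mseq {α : Type*} (A B : List α) : ℕ → List α
  | 0 => A
  | 1 => B
  | 2 => A ++ B
  | n + 3 =>
    if (n + 3) % 2 = 0 then
      mseq A B ((n + 3) / 2) ++ mseq A B (aseq ((n + 3) / 2))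
    else
      mseq A B (aStar ((n + 4) / 2 - 1)) ++ mseq A B ((n + 4) / 2)
decreasing_by
  all_goals first
    | omega
    | exact lt_of_le_of_lt (aseq_le _) (by omega)
    | exact lt_of_le_of_lt (aStar_le _) (by omega)

theorem aseq_even (n : ℕ) (hn : 1 ≤ n) : aseq (2 * n) = aseq n := by
  obtain ⟨p, rfl⟩ : ∃ p, n = p + 1 := ⟨n - 1, by omega⟩
  rw [show 2 * (p + 1) = 2 * p + 2 by ring, aseq, if_pos (by omega),
    show (2 * p + 2) / 2 = p + 1 by omega]

theorem aseq_odd (q : ℕ) : aseq (2 * q + 1) = q + 1 := by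
  rcases q with _ | p
  · simp [aseq]
  · rw [show 2 * (p + 1) + 1 = (2 * p + 1) + 2 by ring, aseq, if_neg (by omega)]
    omega

theorem aseq_pow (r q : ℕ) : aseq (2 ^ r * (2 * q + 1)) = q + 1 := by
  induction r with
  | zero => simpa using aseq_odd q
  | succ r ih =>
    rw [pow_succ', mul_assoc, aseq_even _ (Nat.mul_pos (by positivity) (by omega)), ih]

theorem aStar_pow (r q : ℕ) (hq : 1 ≤ q) : aStar (2 ^ r * (2 * q + 1)) = q + 1 := by
  unfold aStar
  rw [if_neg, aseq_pow]
  rintro ⟨k, hk⟩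
  have h1 : (2 * q + 1) ∣ 2 ^ k := ⟨2 ^ r, by rw [← hk, mul_comm]⟩
  obtain ⟨t, -, ht⟩ := (Nat.dvd_prime_pow Nat.prime_two).1 h1
  rcases t with _ | t
  · simp at ht; omega
  · rw [pow_succ] at ht; omega

theorem mseq_odd {α : Type*} (A B : List α) (n : ℕ) (hn : 1 ≤ n) :
    mseq A B (2 * n + 1) = mseq A B (aStar n) ++ mseq A B (n + 1) := by
  obtain ⟨p, rfl⟩ : ∃ p, n = p + 1 := ⟨n - 1, by omega⟩
  rw [show 2 * (p + 1) + 1 = 2 * p + 3 by ring, mseq, if_neg (by omega),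
    show (2 * p + 4) / 2 = p + 2 by omega, show p + 2 - 1 = p + 1 by omega]

theorem mseq_even {α : Type*} (A B : List α) (n : ℕ) (hn : 2 ≤ n) :
    mseq A B (2 * n) = mseq A B n ++ mseq A B (aseq n) := by
  obtain ⟨p, rfl⟩ : ∃ p, n = p + 2 := ⟨n - 2, by omega⟩
  rw [show 2 * (p + 2) = (2 * p + 1) + 3 by ring, mseq, if_pos (by omega),
    show (2 * p + 1 + 3) / 2 = p + 2 by omega]

theorem mseq_pow {α : Type*} (A B : List α) (r q c : ℕ)
    (hc : ∀ r, aStar (2 ^ r * (2 * q + 1)) = c) :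
    mseq A B (2 ^ r * (2 * q + 1) + 1) =
      (List.replicate r (mseq A B c)).flatten ++ mseq A B (2 * (q + 1)) := by
  induction r with
  | zero => simp [mul_add]
  | succ r ih =>
    rw [pow_succ', mul_assoc, mseq_odd _ _ _ (Nat.mul_pos (by positivity) (by omega)), hc, ih,
      List.replicate_succ, List.flatten_cons, List.append_assoc]

/-- for `i ≥ 2`, `m ≥ 1` and `k = 2^i·m − 2^{i−1} + 1`,
`S_{A,B}(k) = S(m)^i ⊕ S(a(m))` if `m ≥ 2`, and `S_{A,B}(k) = S(0)^i ⊕ S(1)` if `m = 1`. -/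
theorem stmt12 {α : Type*} (A B : List α) (i m : ℕ) (hi : 2 ≤ i) (hm : 1 ≤ m) :
    (2 ≤ m →
      mseq A B (2 ^ i * m - 2 ^ (i - 1) + 1) =
        (List.replicate i (mseq A B m)).flatten ++ mseq A B (aseq m)) ∧
    (m = 1 →
      mseq A B (2 ^ i * m - 2 ^ (i - 1) + 1) =
        (List.replicate i (mseq A B 0)).flatten ++ mseq A B 1) := by
  obtain ⟨r, rfl⟩ : ∃ r, i = r + 1 := ⟨i - 1, by omega⟩
  obtain ⟨q, rfl⟩ : ∃ q, m = q + 1 := ⟨m - 1, by omega⟩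
  have hk : 2 ^ (r + 1) * (q + 1) - 2 ^ (r + 1 - 1) + 1 = 2 ^ r * (2 * q + 1) + 1 := by
    have : 2 ^ (r + 1) * (q + 1) = 2 ^ r * (2 * q + 1) + 2 ^ r := by ring
    rw [this]; simp
  rw [hk]
  constructor
  · intro h
    rw [mseq_pow A B r q (q + 1) (fun r => aStar_pow r q (by omega)), mseq_even _ _ _ h,
      List.replicate_succ']
    simp
  · intro h
    obtain rfl : q = 0 := by omega
    rw [mseq_pow A B r 0 0 (fun r => by simp [aStar]), List.replicate_succ']
    simp [mseq]
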